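/- Let (i,j) ∈ E be an edge of a finite connected simple graph G. Then, without any assumption on the sign of c_OR-0(i,j), one has c_OR(i,j) ≥ (1−α_min)·c_OR-0(i,j) − Δ_ij(α). -/

import Mathlib

namespace Curv

open Finset

noncomputable section

variable {V : Type*} [Fintype V] [DecidableEq V] (G : SimpleGraph V) [DecidableRel G.Adj]

/-- `μ` is a probability distribution on the (finite) vertex set. -/
def IsProb (μ : V → ℝ) : Prop := (∀ x, 0 ≤ μ x) ∧ ∑ x, μ x = 1

/-- `π` is a coupling of `μ` and `ν`. -/
def IsCoupling (μ ν : V → ℝ) (π : V → V → ℝ) : Prop :=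
  (∀ x y, 0 ≤ π x y) ∧ (∀ x, ∑ y, π x y = μ x) ∧ (∀ y, ∑ x, π x y = ν y)

/-- Transport cost of a plan `π` with respect to the shortest-path graph distance. -/
def cost (π : V → V → ℝ) : ℝ := ∑ x, ∑ y, (G.dist x y : ℝ) * π x y

/-- Wasserstein-1 distance between two distributions on the vertex set. -/
def W1 (μ ν : V → ℝ) : ℝ := sInf {c : ℝ | ∃ π, IsCoupling μ ν π ∧ cost G π = c}

/-- Dirac mass at `u`. -/
def dirac (u : V) : V → ℝ := fun x => if x = u then 1 else 0

/-- Uniform distribution on the neighbours of `u`. -/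
def unif (u : V) : V → ℝ := fun x => if G.Adj u x then ((G.degree u : ℝ))⁻¹ else 0

/-- Lazy random-walk measure with laziness parameter `α`. -/
def mGen (α : ℝ) (u : V) : V → ℝ := fun x => α * dirac u x + (1 - α) * unif G u x

/-- Canonical laziness `1/(deg u + 1)`. -/
def alphaL (u : V) : ℝ := ((G.degree u : ℝ) + 1)⁻¹

/-- The lazy random-walk measure `m_u`. -/
def mLazy (u : V) : V → ℝ := mGen G (alphaL G u) u

/-- Ollivier–Ricci curvature (lazy). -/
def cOR (i j : V) : ℝ := 1 - W1 G (mLazy G i) (mLazy G j)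

/-- Non-lazy Ollivier–Ricci curvature. -/
def cOR0 (i j : V) : ℝ := 1 - W1 G (unif G i) (unif G j)

/-- Positive part `[x]₊`. -/
def pos (x : ℝ) : ℝ := max x 0

/-- Triangle count `△(u,v)`. -/
def tri (u v : V) : ℕ := (G.neighborFinset u ∩ G.neighborFinset v).card

/-- Unique neighbours `N(u) \ (N(v) ∪ {v})`. -/
def uniq (u v : V) : Finset V := G.neighborFinset u \ insert v (G.neighborFinset v)

/-- `ξ_u(u,v)`: unique neighbours of `u` having a neighbour among unique neighbours of `v`. -/
def xiSet (u v : V) : Finset V := (uniq G u v).filter fun k => ∃ w ∈ uniq G v u, G.Adj k w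

/-- `Ξ_uv`. -/
def Xi (u v : V) : ℕ := (xiSet G u v).card + (xiSet G v u).card

/-- `□̃(k,u,v) = |N(k) ∩ (N(v)\(N(u)∪{u}))|`. -/
def boxT (k u v : V) : ℕ := (G.neighborFinset k ∩ uniq G v u).card

/-- `ϖ_max(u,v)`. -/
def varpi (u v : V) : ℕ :=
  max (((G.neighborFinset u).erase v).sup fun k => boxT G k u v)
      (((G.neighborFinset v).erase u).sup fun w => boxT G w v u)

/-- `þ_max(u,v) = ϖ_max(u,v)·max{ρ_u,ρ_v}`. -/
def thMax (u v : V) : ℕ := varpi G u v * max (G.degree u) (G.degree v)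

/-- Edgewise 4-cycle coefficient `C₄(u,v)`. -/
def C4 (u v : V) : ℝ := if 0 < Xi G u v then (Xi G u v : ℝ) / (thMax G u v : ℝ) else 0

/-- Graph-wide 4-cycle constant `C₄(G)`. -/
def C4Graph : ℝ := sSup {x : ℝ | ∃ u v, G.Adj u v ∧ x = C4 G u v}

def rhoMin (i j : V) : ℕ := min (G.degree i) (G.degree j)

def rhoMax (i j : V) : ℕ := max (G.degree i) (G.degree j)

/-- `𝔖(i,j)`. -/
def frakS (i j : V) : ℝ := 2 / (G.degree i : ℝ) + 2 / (G.degree j : ℝ) - 2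

/-- `𝔗(i,j)`. -/
def frakT (i j : V) : ℝ := 2 / (rhoMax G i j : ℝ) + 1 / (rhoMin G i j : ℝ)

/-- `𝔎(i,j)`. -/
def frakK (i j : V) : ℝ := 1 - 1 / (rhoMin G i j : ℝ) - 1 / (rhoMax G i j : ℝ)

/-- `Z_min(i,j)`. -/
def Zmin (i j : V) : ℝ := (tri G i j : ℝ) / (rhoMin G i j : ℝ)

/-- `Z_max(i,j)`. -/
def Zmax (i j : V) : ℝ := (tri G i j : ℝ) / (rhoMax G i j : ℝ)

/-- Balanced Forman curvature. -/
def cBF (i j : V) : ℝ :=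
  if rhoMin G i j = 1 then 0
  else frakS G i j + frakT G i j * (tri G i j : ℝ) + C4 G i j

/-- `M` is a matching in the cross-edge bipartite graph `B_ij`. -/
def IsCrossMatching (i j : V) (M : Finset (V × V)) : Prop :=
  (∀ p ∈ M, p.1 ∈ uniq G i j ∧ p.2 ∈ uniq G j i ∧ G.Adj p.1 p.2) ∧
  (∀ p ∈ M, ∀ q ∈ M, p ≠ q → p.1 ≠ q.1 ∧ p.2 ≠ q.2)

/-- Maximum matching size `𝔪(i,j)` in the cross-edge bipartite graph. -/
def matchNum (i j : V) : ℕ :=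
  sSup {n : ℕ | ∃ M : Finset (V × V), IsCrossMatching G i j M ∧ M.card = n}

/-- `𝒮(i,j) = 𝔪(i,j)/ρ_max`. -/
def SS (i j : V) : ℝ := (matchNum G i j : ℝ) / (rhoMax G i j : ℝ)

/-- Lazy per-neighbour weight `w_u = (1-α)/ρ_u`. -/
def wA (α : ℝ) (u : V) : ℝ := (1 - α) / (G.degree u : ℝ)

/-- Lazy conductance sum `Σ`. -/
def SigmaA (αi αj : ℝ) (i j : V) : ℝ :=
  (G.degree i : ℝ) / (1 - αi) + (G.degree j : ℝ) / (1 - αj)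

/-- `Const_α`. -/
def ConstA (αi αj : ℝ) (i j : V) : ℝ :=
  -1 + 2 * (min αi ((1 - αj) / (G.degree j : ℝ)) + min αj ((1 - αi) / (G.degree i : ℝ)))
    + (pos (αi - (1 - αj) / (G.degree j : ℝ)) + pos ((1 - αj) / (G.degree j : ℝ) - αi)
      + pos (αj - (1 - αi) / (G.degree i : ℝ)) + pos ((1 - αi) / (G.degree i : ℝ) - αj))
    + ((G.degree i : ℝ) + (G.degree j : ℝ) - 2) / SigmaA G αi αj i j

/-- `Slope_α`. -/
def SlopeA (αi αj : ℝ) (i j : V) : ℝ := wA G αi i + wA G αj j - 2 / SigmaA G αi αj i j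

/-- `α_⋆`: `α_min` when the non-lazy curvature is nonnegative, `α_max` otherwise. -/
def alphaStar (i j : V) : ℝ :=
  if 0 ≤ cOR0 G i j then min (alphaL G i) (alphaL G j) else max (alphaL G i) (alphaL G j)

/-- `Δ_ij(α) = α_max − α_min` for the canonical laziness. -/
def DeltaL (i j : V) : ℝ := max (alphaL G i) (alphaL G j) - min (alphaL G i) (alphaL G j)

/-!
Say `αᵢ ≤ αⱼ` and split `1 = αᵢ + (αⱼ - αᵢ) + (1 - αⱼ)`. This decomposes the pair `(mᵢ, mⱼ)` as
`αᵢ (δᵢ, δⱼ) + (αⱼ - αᵢ) (νᵢ, δⱼ) + (1 - αⱼ) (νᵢ, νⱼ)`. Since `W₁` is sublinear in the pair of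
marginals, and `W₁(νᵢ, δⱼ) ≤ W₁(νᵢ, νⱼ) + W₁(νⱼ, δⱼ) ≤ W₁(νᵢ, νⱼ) + 1`, it follows that
`W₁(mᵢ, mⱼ) ≤ αᵢ + (αⱼ - αᵢ) + (1 - αᵢ) W₁(νᵢ, νⱼ)`, which rearranges to the curvature bound.
-/

section General

omit [DecidableRel G.Adj]

section Transport

omit [DecidableEq V]

open scoped Pointwise

variable {μ ν μ' ν' : V → ℝ} {π π' : V → V → ℝ}

lemma IsCoupling.swap (h : IsCoupling μ ν π) : IsCoupling ν μ (Function.swap π) :=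
  ⟨fun x y => h.1 y x, h.2.2, h.2.1⟩

lemma IsCoupling.add (h : IsCoupling μ ν π) (h' : IsCoupling μ' ν' π') :
    IsCoupling (μ + μ') (ν + ν') (π + π') :=
  ⟨fun x y => add_nonneg (h.1 x y) (h'.1 x y),
    fun x => by simp only [Pi.add_apply, sum_add_distrib, h.2.1, h'.2.1],
    fun y => by simp only [Pi.add_apply, sum_add_distrib, h.2.2, h'.2.2]⟩

lemma IsCoupling.smul {c : ℝ} (hc : 0 ≤ c) (h : IsCoupling μ ν π) :
    IsCoupling (c • μ) (c • ν) (c • π) :=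
  ⟨fun x y => mul_nonneg hc (h.1 x y),
    fun x => by simp only [Pi.smul_apply, ← smul_sum, h.2.1],
    fun y => by simp only [Pi.smul_apply, ← smul_sum, h.2.2]⟩

lemma IsProb.isCoupling_mul (hμ : IsProb μ) (hν : IsProb ν) :
    IsCoupling μ ν (fun x y => μ x * ν y) :=
  ⟨fun x y => mul_nonneg (hμ.1 x) (hν.1 y),
    fun x => by rw [← mul_sum, hν.2, mul_one],
    fun y => by rw [← sum_mul, hμ.2, one_mul]⟩

lemma IsCoupling.eq_zero_of_right_eq_zero (h : IsCoupling μ ν π) {y : V} (hy : ν y = 0) (x : V) :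
    π x y = 0 :=
  (sum_eq_zero_iff_of_nonneg fun x _ => h.1 x y).1 ((h.2.2 y).trans hy) x (mem_univ x)

lemma cost_swap (π : V → V → ℝ) : cost G (Function.swap π) = cost G π := by
  simp only [cost, Function.swap]
  rw [sum_comm]
  simp only [G.dist_comm]

lemma cost_add (π π' : V → V → ℝ) : cost G (π + π') = cost G π + cost G π' := by
  simp only [cost, Pi.add_apply, mul_add, sum_add_distrib]

lemma cost_smul (c : ℝ) (π : V → V → ℝ) : cost G (c • π) = c * cost G π := by
  simp only [cost, Pi.smul_apply, smul_eq_mul, mul_sum, mul_left_comm]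

lemma IsCoupling.cost_nonneg (h : IsCoupling μ ν π) : 0 ≤ cost G π :=
  sum_nonneg fun x _ => sum_nonneg fun y _ => mul_nonneg (Nat.cast_nonneg _) (h.1 x y)

/-- The set of transport costs of all couplings of `μ` and `ν`, whose infimum is `W1 G μ ν`.
It is empty when `μ` and `ν` have different total mass, and `W1` then takes the junk value `0`. -/
def couplingCosts (μ ν : V → ℝ) : Set ℝ := {c | ∃ π, IsCoupling μ ν π ∧ cost G π = c}

lemma bddBelow_couplingCosts (μ ν : V → ℝ) : BddBelow (couplingCosts G μ ν) :=
  ⟨0, by rintro _ ⟨π, hπ, rfl⟩; exact hπ.cost_nonneg G⟩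

lemma IsProb.couplingCosts_nonempty (hμ : IsProb μ) (hν : IsProb ν) :
    (couplingCosts G μ ν).Nonempty :=
  ⟨_, _, hμ.isCoupling_mul hν, rfl⟩

lemma couplingCosts_add_subset (μ ν μ' ν' : V → ℝ) :
    couplingCosts G μ ν + couplingCosts G μ' ν' ⊆ couplingCosts G (μ + μ') (ν + ν') := by
  rintro _ ⟨_, ⟨π, hπ, rfl⟩, _, ⟨π', hπ', rfl⟩, rfl⟩
  exact ⟨_, hπ.add hπ', cost_add G π π'⟩

lemma smul_couplingCosts_subset {c : ℝ} (hc : 0 ≤ c) (μ ν : V → ℝ) :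
    c • couplingCosts G μ ν ⊆ couplingCosts G (c • μ) (c • ν) := by
  rintro _ ⟨_, ⟨π, hπ, rfl⟩, rfl⟩
  exact ⟨_, hπ.smul hc, cost_smul G c π⟩

lemma couplingCosts_subset_swap (μ ν : V → ℝ) : couplingCosts G μ ν ⊆ couplingCosts G ν μ := by
  rintro _ ⟨π, hπ, rfl⟩
  exact ⟨_, hπ.swap, cost_swap G π⟩

lemma W1_comm (μ ν : V → ℝ) : W1 G μ ν = W1 G ν μ :=
  congrArg sInf ((couplingCosts_subset_swap G μ ν).antisymm (couplingCosts_subset_swap G ν μ))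

lemma IsCoupling.W1_le_cost (h : IsCoupling μ ν π) : W1 G μ ν ≤ cost G π :=
  csInf_le (bddBelow_couplingCosts G μ ν) ⟨π, h, rfl⟩

lemma W1_add_le (h : (couplingCosts G μ ν).Nonempty) (h' : (couplingCosts G μ' ν').Nonempty) :
    W1 G (μ + μ') (ν + ν') ≤ W1 G μ ν + W1 G μ' ν' :=
  calc W1 G (μ + μ') (ν + ν') ≤ sInf (couplingCosts G μ ν + couplingCosts G μ' ν') :=
        csInf_le_csInf (bddBelow_couplingCosts G _ _) (h.add h')
          (couplingCosts_add_subset G μ ν μ' ν')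
    _ = W1 G μ ν + W1 G μ' ν' :=
        csInf_add h (bddBelow_couplingCosts G μ ν) h' (bddBelow_couplingCosts G μ' ν')

lemma W1_smul_le {c : ℝ} (hc : 0 ≤ c) (h : (couplingCosts G μ ν).Nonempty) :
    W1 G (c • μ) (c • ν) ≤ c * W1 G μ ν :=
  calc W1 G (c • μ) (c • ν) ≤ sInf (c • couplingCosts G μ ν) :=
        csInf_le_csInf (bddBelow_couplingCosts G _ _) h.smul_set
          (smul_couplingCosts_subset G hc μ ν)
    _ = c * W1 G μ ν := Real.sInf_smul_of_nonneg hc _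

lemma couplingCosts_add_nonempty (h : (couplingCosts G μ ν).Nonempty)
    (h' : (couplingCosts G μ' ν').Nonempty) : (couplingCosts G (μ + μ') (ν + ν')).Nonempty :=
  (h.add h').mono (couplingCosts_add_subset G μ ν μ' ν')

lemma couplingCosts_smul_nonempty {c : ℝ} (hc : 0 ≤ c) (h : (couplingCosts G μ ν).Nonempty) :
    (couplingCosts G (c • μ) (c • ν)).Nonempty :=
  h.smul_set.mono (smul_couplingCosts_subset G hc μ ν)

-- `dist` is `0` between different components, so the triangle inequality
-- `dist x j ≤ dist x y + dist y j` can fail through a vertex `y` not joined to `j`.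
lemma IsCoupling.sum_dist_mul_le (h : IsCoupling μ ν π) {j : V}
    (hν : ∀ y, ¬ G.Reachable y j → ν y = 0) :
    ∑ x, (G.dist x j : ℝ) * μ x ≤ cost G π + ∑ y, (G.dist y j : ℝ) * ν y := by
  have triangle (x y : V) :
      (G.dist x j : ℝ) * π x y ≤ G.dist x y * π x y + G.dist y j * π x y := by
    by_cases hy : G.Reachable y j
    · rw [← add_mul]
      exact mul_le_mul_of_nonneg_right (mod_cast hy.dist_triangle_right x) (h.1 x y)
    · simp [h.eq_zero_of_right_eq_zero (hν y hy) x]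
  calc ∑ x, (G.dist x j : ℝ) * μ x = ∑ x, ∑ y, (G.dist x j : ℝ) * π x y := by
        simp only [← mul_sum, h.2.1]
    _ ≤ ∑ x, ∑ y, (G.dist x y * π x y + G.dist y j * π x y) :=
        sum_le_sum fun x _ => sum_le_sum fun y _ => triangle x y
    _ = cost G π + ∑ x, ∑ y, G.dist y j * π x y := by
        simp only [cost, sum_add_distrib]
    _ = cost G π + ∑ y, (G.dist y j : ℝ) * ν y := by
        rw [sum_comm]
        simp only [← mul_sum, h.2.2]

lemma IsProb.sum_dist_mul_eq_one_of_neighbors (hν : IsProb ν) {j : V}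
    (hsupp : ∀ x, ¬ G.Adj j x → ν x = 0) : ∑ x, (G.dist x j : ℝ) * ν x = 1 := by
  rw [← hν.2]
  refine sum_congr rfl fun x _ => ?_
  by_cases hx : G.Adj j x
  · rw [SimpleGraph.dist_eq_one_iff_adj.2 hx.symm, Nat.cast_one, one_mul]
  · rw [hsupp x hx, mul_zero]

end Transport

variable {μ ν : V → ℝ} {i j : V} {a b : ℝ}

lemma isProb_dirac (u : V) : IsProb (dirac u) :=
  ⟨fun x => by unfold dirac; split_ifs <;> norm_num, by simp [dirac]⟩

lemma IsProb.W1_dirac_le_sum (hμ : IsProb μ) (j : V) :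
    W1 G μ (dirac j) ≤ ∑ x, (G.dist x j : ℝ) * μ x :=
  ((hμ.isCoupling_mul (isProb_dirac j)).W1_le_cost G).trans_eq (by simp [cost, dirac])

lemma W1_dirac_dirac_le_dist (i j : V) : W1 G (dirac i) (dirac j) ≤ G.dist i j :=
  ((isProb_dirac i).W1_dirac_le_sum G j).trans_eq (by simp [dirac])

lemma W1_dirac_le_W1_add_sum (hμ : IsProb μ) (hν : IsProb ν)
    (hreach : ∀ y, ¬ G.Reachable y j → ν y = 0) :
    W1 G μ (dirac j) ≤ W1 G μ ν + ∑ y, (G.dist y j : ℝ) * ν y := by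
  rw [← sub_le_iff_le_add]
  refine le_csInf (hμ.couplingCosts_nonempty G hν) ?_
  rintro _ ⟨π, hπ, rfl⟩
  rw [sub_le_iff_le_add]
  exact (hμ.W1_dirac_le_sum G j).trans (hπ.sum_dist_mul_le G hreach)

/-- The lazy version `α δ_u + (1 - α) ν` of a one-step distribution `ν` at `u`, with laziness `α`;
these are the measures `m_u` compared by the curvature. -/
def lazyStep (α : ℝ) (u : V) (ν : V → ℝ) : V → ℝ :=
  fun x => α * dirac u x + (1 - α) * ν x

lemma W1_lazyStep_le_of_le (ha : 0 ≤ a) (hab : a ≤ b) (hb : b ≤ 1)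
    (hμ : IsProb μ) (hν : IsProb ν) :
    W1 G (lazyStep a i μ) (lazyStep b j ν) ≤
      a * W1 G (dirac i) (dirac j) + (b - a) * W1 G μ (dirac j) + (1 - b) * W1 G μ ν := by
  have hba : 0 ≤ b - a := sub_nonneg.2 hab
  have hb' : 0 ≤ 1 - b := sub_nonneg.2 hb
  have hμ_split : lazyStep a i μ = a • dirac i + (b - a) • μ + (1 - b) • μ := by
    ext x
    simp only [lazyStep, Pi.add_apply, Pi.smul_apply, smul_eq_mul]
    ring
  have hν_split : lazyStep b j ν = a • dirac j + (b - a) • dirac j + (1 - b) • ν := by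
    ext x
    simp only [lazyStep, Pi.add_apply, Pi.smul_apply, smul_eq_mul]
    ring
  have hij_ne := (isProb_dirac i).couplingCosts_nonempty G (isProb_dirac j)
  have hμj_ne := hμ.couplingCosts_nonempty G (isProb_dirac j)
  have hμν_ne := hμ.couplingCosts_nonempty G hν
  have hij_ne' := couplingCosts_smul_nonempty G ha hij_ne
  have hμj_ne' := couplingCosts_smul_nonempty G hba hμj_ne
  have hμν_ne' := couplingCosts_smul_nonempty G hb' hμν_ne
  rw [hμ_split, hν_split]
  calc W1 G (a • dirac i + (b - a) • μ + (1 - b) • μ)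
        (a • dirac j + (b - a) • dirac j + (1 - b) • ν)
      ≤ W1 G (a • dirac i) (a • dirac j) + W1 G ((b - a) • μ) ((b - a) • dirac j)
          + W1 G ((1 - b) • μ) ((1 - b) • ν) :=
        (W1_add_le G (couplingCosts_add_nonempty G hij_ne' hμj_ne') hμν_ne').trans
          (by gcongr; exact W1_add_le G hij_ne' hμj_ne')
    _ ≤ a * W1 G (dirac i) (dirac j) + (b - a) * W1 G μ (dirac j) + (1 - b) * W1 G μ ν :=
        add_le_add_three (W1_smul_le G ha hij_ne) (W1_smul_le G hba hμj_ne)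
          (W1_smul_le G hb' hμν_ne)

lemma W1_lazyStep_le_of_adj_of_le (hij : G.Adj i j) (ha : 0 ≤ a) (hab : a ≤ b) (hb : b ≤ 1)
    (hμ : IsProb μ) (hν : IsProb ν) (hsupp : ∀ x, ¬ G.Adj j x → ν x = 0) :
    W1 G (lazyStep a i μ) (lazyStep b j ν) ≤ b + (1 - a) * W1 G μ ν := by
  have hij_le : W1 G (dirac i) (dirac j) ≤ 1 := by
    simpa [SimpleGraph.dist_eq_one_iff_adj.2 hij] using W1_dirac_dirac_le_dist G i j
  have hreach (y : V) (hy : ¬ G.Reachable y j) : ν y = 0 :=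
    hsupp y fun hjy => hy hjy.symm.reachable
  have hμj_le : W1 G μ (dirac j) ≤ W1 G μ ν + 1 := by
    simpa only [hν.sum_dist_mul_eq_one_of_neighbors G hsupp]
      using W1_dirac_le_W1_add_sum G hμ hν hreach
  calc W1 G (lazyStep a i μ) (lazyStep b j ν)
      ≤ a * W1 G (dirac i) (dirac j) + (b - a) * W1 G μ (dirac j) + (1 - b) * W1 G μ ν :=
        W1_lazyStep_le_of_le G ha hab hb hμ hν
    _ ≤ a * 1 + (b - a) * (W1 G μ ν + 1) + (1 - b) * W1 G μ ν := by
        gcongr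
    _ = b + (1 - a) * W1 G μ ν := by ring

theorem stmt6_general (i j : V) (hij : G.Adj i j)
    (αi αj : ℝ) (hαi : αi ∈ Set.Icc (0 : ℝ) 1) (hαj : αj ∈ Set.Icc (0 : ℝ) 1)
    (νi νj : V → ℝ) (hνi : IsProb νi) (hνj : IsProb νj)
    (hsi : ∀ x, ¬ G.Adj i x → νi x = 0) (hsj : ∀ x, ¬ G.Adj j x → νj x = 0) :
    1 - W1 G (lazyStep αi i νi) (lazyStep αj j νj)
      ≥ (1 - min αi αj) * (1 - W1 G νi νj) - (max αi αj - min αi αj) := by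
  rcases le_total αi αj with h | h
  · have hW := W1_lazyStep_le_of_adj_of_le G hij hαi.1 h hαj.2 hνi hνj hsj
    rw [min_eq_left h, max_eq_right h]
    linarith
  · have hW := W1_lazyStep_le_of_adj_of_le G hij.symm hαj.1 h hαi.2 hνj hνi hsi
    rw [min_eq_right h, max_eq_left h, W1_comm G νi, W1_comm G (lazyStep αi i νi)]
    linarith

end General

/-- sign-agnostic bound `c_OR ≥ (1−α_min)·c_OR-0 − Δ_ij(α)`. -/
theorem stmt6 (hG : G.Connected) (i j : V) (hij : G.Adj i j)
    (αi αj : ℝ) (hαi : αi ∈ Set.Icc (0:ℝ) 1) (hαj : αj ∈ Set.Icc (0:ℝ) 1)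
    (νi νj : V → ℝ) (hνi : IsProb νi) (hνj : IsProb νj)
    (hsi : ∀ x, ¬ G.Adj i x → νi x = 0) (hsj : ∀ x, ¬ G.Adj j x → νj x = 0) :
    1 - W1 G (fun x => αi * dirac i x + (1 - αi) * νi x)
          (fun x => αj * dirac j x + (1 - αj) * νj x)
      ≥ (1 - min αi αj) * (1 - W1 G νi νj) - (max αi αj - min αi αj) := by
  exact stmt6_general G i j hij αi αj hαi hαj νi νj hνi hνj hsi hsj

end

end Curv
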